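/- Let δ>0 and let 0<s<r<1. Then ∫₀^∞ b^{δ−1} (d³/db³)Σ^δ_{r,s}(b) db = −(δ−2) · K(δ) · (r−s)^{δ/2−1} · s^{1/2} · (1−r)^{−3/2} · r^{−(δ+1)/2} · (1−s)^{(3−δ)/2} · ₂F₁((δ+1)/2,(δ−3)/2,δ/2, s(1−r)/(r(1−s))). -/

import Mathlib

open MeasureTheory Real Filter

/-- Ascending Pochhammer symbol `(a)_k = a(a+1)⋯(a+k-1)`. -/
noncomputable def poch (a : ℝ) (k : ℕ) : ℝ := ∏ i ∈ Finset.range k, (a + i)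

/-- Gauss hypergeometric function `₂F₁(a,b,c,z) = ∑ (a)_k (b)_k / (k! (c)_k) z^k`. -/
noncomputable def hyp2F1 (a b c z : ℝ) : ℝ :=
  ∑' k : ℕ, (poch a k * poch b k) / ((Nat.factorial k : ℝ) * poch c k) * z ^ k

/-- `K(δ) = 2 Γ((δ+1)/2)² / Γ(δ/2)²`. -/
noncomputable def Kcoef (δ : ℝ) : ℝ :=
  2 * Real.Gamma ((δ + 1) / 2) ^ 2 / Real.Gamma (δ / 2) ^ 2

/-- Two-point kernel `G_δ(s,r)`, equal to the second moment `E^δ[X_s X_r]` of a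
δ-dimensional Bessel bridge from 0 to 0 over [0,1]. -/
noncomputable def twoPt (δ s r : ℝ) : ℝ :=
  if s < r then
    Kcoef δ * (r - s) ^ (δ / 2 + 1) * (s * (1 - r)) ^ ((1 : ℝ) / 2) *
      (r * (1 - s)) ^ (-((δ + 1) / 2)) *
      hyp2F1 ((δ + 1) / 2) ((δ + 1) / 2) (δ / 2) (s * (1 - r) / (r * (1 - s)))
  else
    Kcoef δ * (s - r) ^ (δ / 2 + 1) * (r * (1 - s)) ^ ((1 : ℝ) / 2) *
      (s * (1 - r)) ^ (-((δ + 1) / 2)) *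
      hyp2F1 ((δ + 1) / 2) ((δ + 1) / 2) (δ / 2) (r * (1 - s) / (s * (1 - r)))

/-- Coefficient `D(s,r)`. -/
noncomputable def Dcoef (s r : ℝ) : ℝ :=
  if s < r then (1 - s) / ((r - s) * (1 - r)) else s / (r * (s - r))

/-- Coefficient `C_k = Γ(k+(δ+1)/2)/(Γ(δ/2) Γ(k+δ/2) k!)`. -/
noncomputable def Ccoef (δ : ℝ) (k : ℕ) : ℝ :=
  Real.Gamma ((k : ℝ) + (δ + 1) / 2) /
    (Real.Gamma (δ / 2) * Real.Gamma ((k : ℝ) + δ / 2) * (Nat.factorial k : ℝ))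

/-- Coefficient `f_k(s,r)`. -/
noncomputable def fcoef (s r : ℝ) (k : ℕ) : ℝ :=
  if s < r then (2 * (r - s)) ^ ((1 : ℝ) / 2 - (k : ℝ)) * (s / r) ^ ((k : ℝ) + 1 / 2)
  else (2 * (s - r)) ^ ((1 : ℝ) / 2 - (k : ℝ)) * ((1 - s) / (1 - r)) ^ ((k : ℝ) + 1 / 2)

/-- `Σ^δ_{r,s}(b) = Σ^δ_r(X_s | b)`, the density-weighted conditional expectation of a
δ-dimensional Bessel bridge. -/
noncomputable def SigmaRS (δ r s b : ℝ) : ℝ :=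
  ((2 : ℝ) ^ (δ / 2 - 1) * (r * (1 - r)) ^ (δ / 2))⁻¹ *
    Real.exp (-(Dcoef s r) * b ^ 2 / 2) *
    ∑' k : ℕ, Ccoef δ k * fcoef s r k * b ^ (2 * k)


noncomputable def Ss (a : ℕ → ℝ) (x : ℝ) : ℝ := ∑' k : ℕ, a k * x ^ k

def Rapid (a : ℕ → ℝ) : Prop := ∀ R : ℝ, 0 < R → Summable fun k => |a k| * R ^ k

lemma Rapid.mulk {a : ℕ → ℝ} (h : Rapid a) : Rapid (fun k => (k : ℝ) * a k) := by
  intro R hR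
  refine Summable.of_nonneg_of_le (fun k => by positivity) (fun k => ?_) (h (2 * R) (by positivity))
  have : (k : ℝ) ≤ 2 ^ k := by exact_mod_cast (Nat.lt_two_pow_self (n := k)).le
  rw [abs_mul, mul_pow, Nat.abs_cast]
  have h2 : 0 ≤ |a k| * R ^ k := by positivity
  nlinarith

lemma Rapid.summable {a : ℕ → ℝ} (h : Rapid a) {x : ℝ} (hx : 0 < x) :
    Summable fun k => a k * x ^ k := by
  apply Summable.of_abs
  refine (h x hx).congr fun k => ?_
  rw [abs_mul, abs_of_pos (pow_pos hx k)]

lemma Rapid.hasDerivAt {a : ℕ → ℝ} (h : Rapid a) {x : ℝ} (hx : 0 < x) :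
    HasDerivAt (Ss a) (Ss (fun k => (k : ℝ) * a k) x / x) x := by
  have hR : (1:ℝ) ≤ x + 1 := by linarith
  have := hasDerivAt_tsum_of_isPreconnected (g := fun (k : ℕ) (y : ℝ) => a k * y ^ k)
    (g' := fun (k : ℕ) (y : ℝ) => a k * (k * y ^ (k - 1)))
    (u := fun (k : ℕ) => |(k : ℝ) * a k| * (x + 1) ^ k) (t := Set.Ioo 0 (x + 1)) (y₀ := x) (y := x)
    (h.mulk (x + 1) (by linarith)) isOpen_Ioo isPreconnected_Ioo
    (fun k y hy => (hasDerivAt_pow k y).const_mul (a k)) ?_ ⟨hx, by linarith⟩ (h.summable hx)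
    ⟨hx, by linarith⟩
  · refine HasDerivAt.congr_deriv (f := Ss a) this ?_
    unfold Ss
    rw [← tsum_div_const]
    refine tsum_congr fun k => ?_
    rcases k with _ | k
    · simp
    · simp [pow_succ]; field_simp
  · intro k y hy
    rw [Real.norm_eq_abs, ← mul_assoc, mul_comm (a k), abs_mul]
    gcongr
    rw [abs_of_pos (pow_pos hy.1 _)]
    calc y ^ (k-1) ≤ (x+1)^(k-1) := by have := hy.1; have := hy.2; gcongr
      _ ≤ (x+1)^k := pow_le_pow_right₀ hR (Nat.sub_le _ _)

noncomputable def Gs (D : ℝ) (a : ℕ → ℝ) (b : ℝ) : ℝ := Real.exp (-D * b ^ 2 / 2) * Ss a (b ^ 2)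

lemma Gs_hasDerivAt {D : ℝ} {a : ℕ → ℝ} (h : Rapid a) {b : ℝ} (hb : 0 < b) :
    HasDerivAt (Gs D a) (2 / b * Gs D (fun k => (k : ℝ) * a k) b - D * b * Gs D a b) b := by
  have h1 : HasDerivAt (fun b : ℝ => b ^ 2) (2 * b) b := by simpa using hasDerivAt_pow 2 b
  have h2 := (h.hasDerivAt (x := b ^ 2) (by positivity)).comp b h1
  have h3 : HasDerivAt (fun b : ℝ => Real.exp (-D * b ^ 2 / 2))
      (Real.exp (-D * b ^ 2 / 2) * (-D * (2 * b) / 2)) b :=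
    ((h1.const_mul (-D)).div_const 2).exp
  refine (h3.mul h2).congr_deriv ?_
  simp only [Gs, Function.comp]
  field_simp
  ring

lemma Gs_deriv3 {D : ℝ} {a : ℕ → ℝ} (h : Rapid a) {b : ℝ} (hb : 0 < b) :
    deriv^[3] (Gs D a) b = (8 * Gs D (fun k => (k : ℝ) * (k * (k * a k))) b
      - 12 * Gs D (fun k => (k : ℝ) * (k * a k)) b + 4 * Gs D (fun k => (k : ℝ) * a k) b
      - 12 * D * b ^ 2 * Gs D (fun k => (k : ℝ) * (k * a k)) b
      + 3 * D ^ 2 * b ^ 4 * (2 * Gs D (fun k => (k : ℝ) * a k) b + Gs D a b)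
      - D ^ 3 * b ^ 6 * Gs D a b) / b ^ 3 := by
  have e1 : ∀ b : ℝ, 0 < b → deriv (Gs D a) b =
      2 * (Gs D (fun k => (k : ℝ) * a k) b / b) - D * (b * Gs D a b) := by
    intro b hb
    rw [(Gs_hasDerivAt h hb).deriv]; ring
  have e2 : ∀ b : ℝ, 0 < b → deriv (deriv (Gs D a)) b =
      4 * (Gs D (fun k => (k : ℝ) * (k * a k)) b / b ^ 2)
        - 2 * (Gs D (fun k => (k : ℝ) * a k) b / b ^ 2)
      - 4 * D * Gs D (fun k => (k : ℝ) * a k) b - D * Gs D a b + D ^ 2 * (b ^ 2 * Gs D a b) := by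
    intro b hb
    have : deriv (Gs D a) =ᶠ[nhds b] fun b =>
      2 * (Gs D (fun k => (k : ℝ) * a k) b / b) - D * (b * Gs D a b) := by
      filter_upwards [lt_mem_nhds hb] with c hc using e1 c hc
    rw [this.deriv_eq]
    have d0 := Gs_hasDerivAt (D := D) h hb
    have d1 := Gs_hasDerivAt (D := D) h.mulk hb
    have := ((d1.div (hasDerivAt_id b) hb.ne').const_mul 2).sub
      (((hasDerivAt_id b).mul d0).const_mul D)
    refine (HasDerivAt.deriv (this.congr_deriv ?_ :))
    simp only [id]
    field_simp
    ring
  change deriv (deriv (deriv (Gs D a))) b = _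
  have : deriv (deriv (Gs D a)) =ᶠ[nhds b] fun b =>
      4 * (Gs D (fun k => (k : ℝ) * (k * a k)) b / b ^ 2)
        - 2 * (Gs D (fun k => (k : ℝ) * a k) b / b ^ 2)
      - 4 * D * Gs D (fun k => (k : ℝ) * a k) b - D * Gs D a b + D ^ 2 * (b ^ 2 * Gs D a b) := by
    filter_upwards [lt_mem_nhds hb] with c hc using e2 c hc
  rw [this.deriv_eq]
  have d0 := Gs_hasDerivAt (D := D) h hb
  have d1 := Gs_hasDerivAt (D := D) h.mulk hb
  have d2 := Gs_hasDerivAt (D := D) h.mulk.mulk hb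
  have hp : HasDerivAt (fun b : ℝ => b ^ 2) (2 * b) b := by simpa using hasDerivAt_pow 2 b
  have hb2 : b ^ 2 ≠ 0 := by positivity
  have := (((((d2.div hp hb2).const_mul 4).sub ((d1.div hp hb2).const_mul 2)).sub
    (d1.const_mul (4 * D))).sub (d0.const_mul D)).add ((hp.mul d0).const_mul (D ^ 2))
  refine (HasDerivAt.deriv (this.congr_deriv ?_ :))
  field_simp
  ring

/-- moment -/
noncomputable def Mo (D p : ℝ) : ℝ := 1 / 2 * (2 / D) ^ (p / 2) * Real.Gamma (p / 2)

lemma Mo_int {D p : ℝ} (hD : 0 < D) (hp : 0 < p) :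
    IntegrableOn (fun b : ℝ => b ^ (p - 1) * Real.exp (-D * b ^ 2 / 2)) (Set.Ioi 0) ∧
    ∫ b in Set.Ioi (0:ℝ), b ^ (p - 1) * Real.exp (-D * b ^ 2 / 2) = Mo D p := by
  have e : ∀ b : ℝ, -D * b ^ 2 / 2 = -(D / 2) * b ^ 2 := fun b => by ring
  simp only [e]
  refine ⟨integrableOn_rpow_mul_exp_neg_mul_sq (by positivity) (by linarith), ?_⟩
  have := integral_rpow_mul_exp_neg_mul_rpow (p := 2) (q := p - 1) (b := D / 2) (by norm_num)
    (by linarith) (by positivity)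
  simp only [Real.rpow_two] at this
  rw [this, Mo, show -(p - 1 + 1) / 2 = -(p / 2) by ring, Real.rpow_neg (by positivity), ← Real.inv_rpow (by positivity), inv_div]
  ring_nf

lemma Mo_add_two {D p : ℝ} (hD : 0 < D) (hp : 0 < p) : Mo D (p + 2) = p / D * Mo D p := by
  rw [Mo, Mo, show (p + 2) / 2 = p / 2 + 1 by ring, Real.Gamma_add_one (by positivity),
    Real.rpow_add_one (by positivity)]
  field_simp

lemma Mo_nonneg {D p : ℝ} (hD : 0 < D) (hp : 0 < p) : 0 < Mo D p := by
  unfold Mo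
  have := Real.Gamma_pos_of_pos (s := p / 2) (by positivity)
  positivity

lemma cMo {D p c : ℝ} (hD : 0 < D) (h : c = 0 ∨ 0 < p) :
    IntegrableOn (fun b : ℝ => c * (b ^ (p - 1) * Real.exp (-D * b ^ 2 / 2))) (Set.Ioi 0) ∧
    ∫ b in Set.Ioi (0:ℝ), c * (b ^ (p - 1) * Real.exp (-D * b ^ 2 / 2)) = c * Mo D p := by
  rcases h with rfl | h
  · simp
  · refine ⟨(Mo_int hD h).1.const_mul c, ?_⟩
    rw [integral_const_mul, (Mo_int hD h).2]

lemma poch_succ (a : ℝ) (k : ℕ) : poch a (k + 1) = poch a k * (a + k) := by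
  simp [poch, Finset.prod_range_succ]

lemma poch_succ' (a : ℝ) (k : ℕ) : poch a (k + 1) = a * poch (a + 1) k := by
  simp only [poch, Finset.prod_range_succ']
  rw [mul_comm]; congr 1
  · simp
  · refine Finset.prod_congr rfl fun i _ => ?_
    push_cast; ring

lemma Gamma_poch {a : ℝ} (ha : 0 < a) (k : ℕ) :
    Real.Gamma (k + a) = Real.Gamma a * poch a k := by
  induction k with
  | zero => simp [poch]
  | succ k ih =>
    rw [poch_succ, show ((k + 1 : ℕ) : ℝ) + a = (k + a) + 1 by push_cast; ring,
      Real.Gamma_add_one (by positivity), ih]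
    ring

/-- terms -/
noncomputable def psi (δ D : ℝ) (k : ℕ) (b : ℝ) : ℝ :=
  (2 * k * (2 * k - 1) * (2 * k - 2)) * (b ^ ((δ + 2 * k - 3) - 1) * Real.exp (-D * b ^ 2 / 2))
  - (3 * D * (2 * k) ^ 2) * (b ^ ((δ + 2 * k - 1) - 1) * Real.exp (-D * b ^ 2 / 2))
  + (3 * D ^ 2 * (2 * k + 1)) * (b ^ ((δ + 2 * k + 1) - 1) * Real.exp (-D * b ^ 2 / 2))
  - D ^ 3 * (b ^ ((δ + 2 * k + 3) - 1) * Real.exp (-D * b ^ 2 / 2))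

lemma c0 {δ : ℝ} (hδ : 0 < δ) (k : ℕ) :
    (2 * k * (2 * k - 1) * (2 * k - 2) : ℝ) = 0 ∨ 0 < δ + 2 * k - 3 := by
  rcases k with _ | _ | k
  · simp
  · simp
  · right; push_cast
    have : (0:ℝ) ≤ k := by positivity
    linarith

lemma c1 {δ D : ℝ} (hδ : 0 < δ) (k : ℕ) :
    (3 * D * (2 * k) ^ 2 : ℝ) = 0 ∨ 0 < δ + 2 * k - 1 := by
  rcases k with _ | k
  · simp
  · right; push_cast
    have : (0:ℝ) ≤ k := by positivity
    linarith

lemma int4 {f0 f1 f2 f3 : ℝ → ℝ} {S : Set ℝ} (i0 : IntegrableOn f0 S) (i1 : IntegrableOn f1 S)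
    (i2 : IntegrableOn f2 S) (i3 : IntegrableOn f3 S) :
    (∫ b in S, (f0 b - f1 b + f2 b - f3 b) = (∫ b in S, f0 b) - (∫ b in S, f1 b)
      + (∫ b in S, f2 b) - ∫ b in S, f3 b) ∧
    (∫ b in S, (f0 b + f1 b + f2 b + f3 b) = (∫ b in S, f0 b) + (∫ b in S, f1 b)
      + (∫ b in S, f2 b) + ∫ b in S, f3 b) := by
  have h1 : IntegrableOn (fun b => f0 b - f1 b) S := i0.sub i1
  have h2 : IntegrableOn (fun b => f0 b - f1 b + f2 b) S := h1.add i2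
  have g1 : IntegrableOn (fun b => f0 b + f1 b) S := i0.add i1
  have g2 : IntegrableOn (fun b => f0 b + f1 b + f2 b) S := g1.add i2
  constructor
  · rw [integral_sub h2 i3, integral_add h1 i2, integral_sub i0 i1]
  · rw [integral_add g2 i3, integral_add g1 i2, integral_add i0 i1]

lemma psi_int {δ D : ℝ} (hδ : 0 < δ) (hD : 0 < D) (k : ℕ) :
    IntegrableOn (psi δ D k) (Set.Ioi 0) ∧
    ∫ b in Set.Ioi (0:ℝ), psi δ D k b =
      (2 * k * (2 * k - 1) * (2 * k - 2)) * Mo D (δ + 2 * k - 3)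
      - (3 * D * (2 * k) ^ 2) * Mo D (δ + 2 * k - 1)
      + (3 * D ^ 2 * (2 * k + 1)) * Mo D (δ + 2 * k + 1) - D ^ 3 * Mo D (δ + 2 * k + 3) := by
  obtain ⟨i0, v0⟩ := cMo hD (c0 hδ k)
  obtain ⟨i1, v1⟩ := cMo hD (c1 (D := D) hδ k)
  obtain ⟨i2, v2⟩ := cMo (p := δ + 2 * k + 1) (c := 3 * D ^ 2 * (2 * k + 1)) hD
    (Or.inr (by positivity))
  obtain ⟨i3, v3⟩ := cMo (p := δ + 2 * k + 3) (c := D ^ 3) hD (Or.inr (by positivity))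
  refine ⟨((i0.sub i1).add i2).sub i3, ?_⟩
  rw [← v0, ← v1, ← v2, ← v3, ← (int4 i0 i1 i2 i3).1]
  rfl

lemma psi_bound {δ D : ℝ} (hδ : 0 < δ) (hD : 0 < D) (k : ℕ) :
    ∫ b in Set.Ioi (0:ℝ), ‖psi δ D k b‖ ≤ 12 * D ^ 3 * Mo D (δ + 2 * k + 3) := by
  obtain ⟨i0, v0⟩ := cMo hD (c0 hδ k)
  obtain ⟨i1, v1⟩ := cMo hD (c1 (D := D) hδ k)
  obtain ⟨i2, v2⟩ := cMo (p := δ + 2 * k + 1) (c := 3 * D ^ 2 * (2 * k + 1)) hD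
    (Or.inr (by positivity))
  obtain ⟨i3, v3⟩ := cMo (p := δ + 2 * k + 3) (c := D ^ 3) hD (Or.inr (by positivity))
  have hc0 : (0:ℝ) ≤ 2 * k * (2 * k - 1) * (2 * k - 2) := by
    rcases k with _ | k
    · simp
    · push_cast
      have : (0:ℝ) ≤ k := by positivity
      have h1 : (0:ℝ) ≤ 2 * (k + 1) - 1 := by linarith
      have h2 : (0:ℝ) ≤ 2 * (k + 1) - 2 := by linarith
      positivity
  have hle : ∫ b in Set.Ioi (0:ℝ), ‖psi δ D k b‖ ≤
      (2 * k * (2 * k - 1) * (2 * k - 2)) * Mo D (δ + 2 * k - 3)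
      + (3 * D * (2 * k) ^ 2) * Mo D (δ + 2 * k - 1)
      + (3 * D ^ 2 * (2 * k + 1)) * Mo D (δ + 2 * k + 1) + D ^ 3 * Mo D (δ + 2 * k + 3) := by
    rw [← v0, ← v1, ← v2, ← v3, ← (int4 i0 i1 i2 i3).2]
    refine setIntegral_mono_on (psi_int hδ hD k).1.norm (((i0.add i1).add i2).add i3)
      measurableSet_Ioi fun b hb => ?_
    have hb : 0 < b := hb
    rw [Real.norm_eq_abs, psi, abs_le]
    have t0 := mul_nonneg hc0
      (by positivity : 0 ≤ b ^ ((δ + 2 * k - 3) - 1) * Real.exp (-D * b ^ 2 / 2))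
    have t1 : 0 ≤ (3 * D * (2 * k) ^ 2) * (b ^ ((δ + 2 * k - 1) - 1) * Real.exp (-D * b ^ 2 / 2)) :=
      by positivity
    have t2 : 0 ≤ (3 * D ^ 2 * (2 * k + 1)) *
      (b ^ ((δ + 2 * k + 1) - 1) * Real.exp (-D * b ^ 2 / 2)) := by positivity
    have t3 : 0 ≤ D ^ 3 * (b ^ ((δ + 2 * k + 3) - 1) * Real.exp (-D * b ^ 2 / 2)) := by positivity
    constructor <;> linarith
  refine hle.trans ?_
  have hk : (0:ℝ) ≤ k := by positivity
  have m3 := Mo_nonneg (p := δ + 2 * k + 3) hD (by positivity)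
  have m2 := Mo_nonneg (p := δ + 2 * k + 1) hD (by positivity)
  have r3 := Mo_add_two (p := δ + 2 * k + 1) hD (by positivity)
  rw [show δ + 2 * k + 1 + 2 = δ + 2 * (k:ℝ) + 3 by ring] at r3
  have b2 : (3 * D ^ 2 * (2 * k + 1)) * Mo D (δ + 2 * k + 1) ≤ 3 * D ^ 3 * Mo D (δ + 2 * k + 3) := by
    rw [r3]
    field_simp
    nlinarith
  have b1 : (3 * D * (2 * k) ^ 2) * Mo D (δ + 2 * k - 1) ≤ 6 * D ^ 3 * Mo D (δ + 2 * k + 3) := by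
    rcases k with _ | j
    · have : 0 ≤ D ^ 3 * Mo D (δ + 2 * ((0 : ℕ) : ℝ) + 3) := mul_nonneg (by positivity) m3.le
      simp only [Nat.cast_zero, mul_zero, zero_mul, add_zero] at this ⊢
      norm_num
      linarith
    · have hj : (0:ℝ) ≤ j := by positivity
      have hp : 0 < δ + 2 * ((j + 1 : ℕ) : ℝ) - 1 := by push_cast; linarith
      have m1 := Mo_nonneg hD hp
      have r2 := Mo_add_two hD hp
      rw [show δ + 2 * ((j + 1 : ℕ) : ℝ) - 1 + 2 = δ + 2 * ((j + 1 : ℕ) : ℝ) + 1 by ring] at r2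
      rw [r3, r2]
      push_cast at *
      generalize Mo D (δ + 2 * ((j:ℝ) + 1) - 1) = m at *
      have : (2 * ((j:ℝ) + 1)) ^ 2 ≤ 2 * ((δ + 2 * (j + 1) + 1) * (δ + 2 * (j + 1) - 1)) := by
        nlinarith [mul_nonneg hδ.le hj]
      calc 3 * D * (2 * ((j:ℝ) + 1)) ^ 2 * m = 3 * D * m * (2 * ((j:ℝ) + 1)) ^ 2 := by ring
        _ ≤ 3 * D * m * (2 * ((δ + 2 * (j + 1) + 1) * (δ + 2 * (j + 1) - 1))) := by gcongr
        _ = _ := by field_simp; ring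
  have b0 : (2 * k * (2 * k - 1) * (2 * k - 2)) * Mo D (δ + 2 * k - 3)
      ≤ 2 * D ^ 3 * Mo D (δ + 2 * k + 3) := by
    rcases k with _ | _ | j
    · have : 0 ≤ D ^ 3 * Mo D (δ + 2 * ((0 : ℕ) : ℝ) + 3) := mul_nonneg (by positivity) m3.le
      simp only [Nat.cast_zero, mul_zero, zero_mul, add_zero] at this ⊢
      norm_num
      linarith
    · norm_num
      norm_num at m3
      positivity
    · have hj : (0:ℝ) ≤ j := by positivity
      have hp : 0 < δ + 2 * ((j + 1 + 1 : ℕ) : ℝ) - 3 := by push_cast; linarith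
      have hp1 : 0 < δ + 2 * ((j + 1 + 1 : ℕ) : ℝ) - 1 := by linarith
      have m1 := Mo_nonneg hD hp
      have r1 := Mo_add_two hD hp
      have r2 := Mo_add_two hD hp1
      rw [show δ + 2 * ((j + 1 + 1 : ℕ) : ℝ) - 1 + 2 = δ + 2 * ((j + 1 + 1: ℕ) : ℝ) + 1 by ring] at r2
      rw [show δ + 2 * ((j + 1 + 1 : ℕ) : ℝ) - 3 + 2 = δ + 2 * ((j + 1 + 1: ℕ) : ℝ) - 1 by ring] at r1
      rw [r3, r2, r1]
      push_cast at *
      generalize Mo D (δ + 2 * ((j:ℝ) + 1 + 1) - 3) = m at *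
      have a1 : 2 * ((j:ℝ) + 1 + 1) ≤ δ + 2 * (j + 1 + 1) + 1 := by linarith
      have a2 : 2 * ((j:ℝ) + 1 + 1) - 1 ≤ δ + 2 * (j + 1 + 1) - 1 := by linarith
      have a3 : 2 * ((j:ℝ) + 1 + 1) - 2 ≤ 2 * (δ + 2 * (j + 1 + 1) - 3) := by linarith
      have : (2 * ((j:ℝ) + 1 + 1)) * (2 * ((j:ℝ) + 1 + 1) - 1) * (2 * ((j:ℝ) + 1 + 1) - 2) ≤
        (δ + 2 * (j + 1 + 1) + 1) * (δ + 2 * (j + 1 + 1) - 1) * (2 * (δ + 2 * (j + 1 + 1) - 3)) := by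
        apply mul_le_mul (mul_le_mul a1 a2 _ _) a3
        · linarith
        · apply mul_nonneg <;> linarith
        · linarith
        · linarith
      calc _ ≤ _ := mul_le_mul_of_nonneg_right this m1.le
        _ = _ := by field_simp
  linarith

lemma psi_val {δ D : ℝ} (hδ : 0 < δ) (hD : 0 < D) (k : ℕ) :
    ∫ b in Set.Ioi (0:ℝ), psi δ D k b =
      -(δ - 2) * 2 * (2 / D) ^ ((δ - 3) / 2) * Real.Gamma ((δ + 1) / 2) *
        (poch ((δ - 3) / 2) k * (2 / D) ^ k) := by
  rw [(psi_int hδ hD k).2]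
  have hk : (0:ℝ) ≤ k := by positivity
  have r3 := Mo_add_two (p := δ + 2 * k + 1) hD (by positivity)
  rw [show δ + 2 * k + 1 + 2 = δ + 2 * (k:ℝ) + 3 by ring] at r3
  have key : Mo D (δ + 1) = 1 / 2 * ((2 / D) ^ ((δ - 3) / 2) * (2 / D) ^ 2) *
      Real.Gamma ((δ + 1) / 2) := by
    rw [Mo, show (δ + 1) / 2 = (δ - 3) / 2 + (2:ℕ) by push_cast; ring,
      Real.rpow_add_natCast (by positivity)]
  rcases k with _ | _ | j
  · simp only [Nat.cast_zero, mul_zero, add_zero] at r3 ⊢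
    rw [r3, key]
    simp [poch]
    field_simp
    ring
  · have r2 := Mo_add_two (p := δ + 1) hD (by positivity)
    norm_num at r3 ⊢
    rw [show δ + 2 + 3 = δ + 5 by ring, show δ + 2 + 1 = δ + 3 by ring,
      show δ + 2 - 1 = δ + 1 by ring] at *
    rw [show δ + 1 + 2 = δ + 3 by ring] at r2
    rw [r3, r2, key]
    simp [poch]
    field_simp
    ring
  · have hj : (0:ℝ) ≤ j := by positivity
    have hp : 0 < δ + 2 * ((j + 1 + 1 : ℕ) : ℝ) - 3 := by push_cast; linarith
    have hp1 : 0 < δ + 2 * ((j + 1 + 1 : ℕ) : ℝ) - 1 := by linarith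
    have r1 := Mo_add_two hD hp
    have r2 := Mo_add_two hD hp1
    rw [show δ + 2 * ((j + 1 + 1 : ℕ) : ℝ) - 1 + 2 = δ + 2 * ((j + 1 + 1: ℕ) : ℝ) + 1 by ring] at r2
    rw [show δ + 2 * ((j + 1 + 1 : ℕ) : ℝ) - 3 + 2 = δ + 2 * ((j + 1 + 1: ℕ) : ℝ) - 1 by ring] at r1
    have key2 : Mo D (δ + 2 * ((j + 1 + 1 : ℕ) : ℝ) - 3) =
        1 / 2 * ((2 / D) ^ ((δ - 3) / 2) * (2 / D) ^ (j + 2)) *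
      (Real.Gamma ((δ + 1) / 2) * poch ((δ + 1) / 2) j) := by
      rw [Mo, ← Gamma_poch (by positivity), ← Real.rpow_add_natCast (by positivity)]
      push_cast
      ring_nf
    rw [r3, r2, r1, key2, poch_succ', poch_succ',
      show (δ - 3) / 2 + 1 + 1 = (δ + 1) / 2 by ring]
    push_cast
    field_simp
    ring

lemma ratio_lim (x y : ℝ) : Tendsto (fun k : ℕ => ((k:ℝ) + x) / (k + y)) atTop (nhds 1) := by
  have h : Tendsto (fun k : ℕ => 1 + (x - y) / ((k:ℝ) + y)) atTop (nhds (1 + 0)) := by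
    refine tendsto_const_nhds.add (Tendsto.div_atTop tendsto_const_nhds ?_)
    exact tendsto_atTop_add_const_right _ _ tendsto_natCast_atTop_atTop
  rw [add_zero] at h
  refine h.congr' ?_
  have : ∀ᶠ k : ℕ in atTop, -y < (k:ℝ) := tendsto_natCast_atTop_atTop.eventually_gt_atTop (-y)
  filter_upwards [this] with k hk
  have : (k:ℝ) + y ≠ 0 := by linarith
  field_simp
  ring

lemma Ccoef_pos {δ : ℝ} (hδ : 0 < δ) (k : ℕ) : 0 < Ccoef δ k := by
  unfold Ccoef
  have h1 := Real.Gamma_pos_of_pos (s := (k:ℝ) + (δ + 1) / 2) (by positivity)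
  have h2 := Real.Gamma_pos_of_pos (s := (k:ℝ) + δ / 2) (by positivity)
  have h3 := Real.Gamma_pos_of_pos (s := δ / 2) (by positivity)
  positivity

lemma Ccoef_succ {δ : ℝ} (hδ : 0 < δ) (k : ℕ) :
    Ccoef δ (k + 1) = Ccoef δ k * ((k + (δ + 1) / 2) / (k + δ / 2) / (k + 1)) := by
  unfold Ccoef
  rw [show ((k + 1 : ℕ) : ℝ) + (δ + 1) / 2 = (k + (δ + 1) / 2) + 1 by push_cast; ring,
    show ((k + 1 : ℕ) : ℝ) + δ / 2 = (k + δ / 2) + 1 by push_cast; ring,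
    Real.Gamma_add_one (by positivity), Real.Gamma_add_one (by positivity), Nat.factorial_succ]
  have h2 := Real.Gamma_pos_of_pos (s := (k:ℝ) + δ / 2) (by positivity)
  have h3 := Real.Gamma_pos_of_pos (s := δ / 2) (by positivity)
  push_cast
  field_simp

lemma rapid_C {δ q : ℝ} (hδ : 0 < δ) (hq : 0 < q) : Rapid (fun k => Ccoef δ k * q ^ k) := by
  intro R hR
  have hpos : ∀ k, 0 < |Ccoef δ k * q ^ k| * R ^ k := fun k => by
    have := Ccoef_pos hδ k
    positivity
  refine summable_of_ratio_test_tendsto_lt_one (l := 0) one_pos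
    (Eventually.of_forall fun k => (hpos k).ne') ?_
  have h : Tendsto (fun k : ℕ => (((k:ℝ) + (δ + 1) / 2) / (k + δ / 2)) * ((q * R) / ((k:ℝ) + 1)))
      atTop (nhds (1 * 0)) := by
    refine (ratio_lim _ _).mul (Tendsto.div_atTop tendsto_const_nhds ?_)
    exact tendsto_atTop_add_const_right _ _ tendsto_natCast_atTop_atTop
  rw [mul_zero] at h
  refine h.congr fun k => ?_
  rw [Real.norm_of_nonneg (hpos _).le, Real.norm_of_nonneg (hpos _).le]
  have := Ccoef_pos hδ k
  rw [abs_of_pos (by have := Ccoef_pos hδ (k+1); positivity), abs_of_pos (by positivity),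
    Ccoef_succ hδ, pow_succ, pow_succ]
  field_simp

lemma summable_U {δ D q : ℝ} (hδ : 0 < δ) (hD : 0 < D) (hq : 0 < q) (hqD : 2 * q / D < 1) :
    Summable fun k : ℕ => Ccoef δ k * q ^ k * Mo D (δ + 2 * k + 3) := by
  have hpos : ∀ k : ℕ, 0 < Ccoef δ k * q ^ k * Mo D (δ + 2 * k + 3) := fun k => by
    have := Ccoef_pos hδ k
    have := Mo_nonneg (p := δ + 2 * k + 3) hD (by positivity)
    positivity
  refine summable_of_ratio_test_tendsto_lt_one hqD
    (Eventually.of_forall fun k => (hpos k).ne') ?_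
  have h := ((ratio_lim ((δ + 1) / 2) (δ / 2)).mul (ratio_lim ((δ + 3) / 2) 1)).mul_const (2 * q / D)
  rw [one_mul, one_mul] at h
  refine h.congr fun k => ?_
  rw [Real.norm_of_nonneg (hpos _).le, Real.norm_of_nonneg (hpos _).le]
  have := Ccoef_pos hδ k
  have hm := Mo_nonneg (p := δ + 2 * k + 3) hD (by positivity)
  rw [Ccoef_succ hδ, show δ + 2 * ((k + 1 : ℕ) : ℝ) + 3 = (δ + 2 * k + 3) + 2 by push_cast; ring,
    Mo_add_two hD (by positivity), pow_succ]
  generalize Mo D (δ + 2 * k + 3) = m at hm ⊢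
  field_simp
  ring

lemma psi_eq {δ D b : ℝ} (hb : 0 < b) (k : ℕ) :
    psi δ D k b = b ^ (δ - 1) * (Real.exp (-D * b ^ 2 / 2) * ((8 * k ^ 3 - 12 * k ^ 2 + 4 * k
      - 12 * D * b ^ 2 * k ^ 2 + 3 * D ^ 2 * b ^ 4 * (2 * k + 1) - D ^ 3 * b ^ 6)
      * (b ^ 2) ^ k) / b ^ 3) := by
  have e : ∀ m : ℕ, ∀ p : ℝ, p = δ + 2 * k - 3 + m → b ^ (p - 1) =
      b ^ (δ - 1) * ((b ^ 2) ^ k) / b ^ 3 * b ^ m := by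
    intro m p hp
    rw [hp, show δ + 2 * (k:ℝ) - 3 + m - 1 = (δ - 1) + ((2 * k : ℕ) : ℝ) - (3 : ℕ) + (m : ℕ) by
      push_cast; ring, Real.rpow_add_natCast hb.ne', Real.rpow_sub_natCast hb.ne',
      Real.rpow_add_natCast hb.ne', pow_mul]
  rw [psi, e 0 (δ + 2 * k - 3) (by push_cast; ring), e 2 (δ + 2 * k - 1) (by push_cast; ring),
    e 4 (δ + 2 * k + 1) (by push_cast; ring), e 6 (δ + 2 * k + 3) (by push_cast; ring)]
  ring

lemma tsum_psi {δ D b : ℝ} {a : ℕ → ℝ} (h : Rapid a) (hb : 0 < b) :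
    b ^ (δ - 1) * deriv^[3] (Gs D a) b = ∑' k, a k * psi δ D k b := by
  rw [Gs_deriv3 h hb]
  have hb2 : 0 < b ^ 2 := by positivity
  have s0 := (h.summable hb2).hasSum
  have s1 := (h.mulk.summable hb2).hasSum
  have s2 := (h.mulk.mulk.summable hb2).hasSum
  have s3 := (h.mulk.mulk.mulk.summable hb2).hasSum
  have := (((((((s3.mul_left 8).sub (s2.mul_left 12)).add (s1.mul_left 4)).sub
    (s2.mul_left (12 * D * b ^ 2))).add (((s1.mul_left 2).add s0).mul_left (3 * D ^ 2 * b ^ 4))).sub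
    (s0.mul_left (D ^ 3 * b ^ 6))).mul_left (b ^ (δ - 1) * (Real.exp (-D * b ^ 2 / 2)) / b ^ 3))
  symm
  convert this.tsum_eq using 1
  · refine tsum_congr fun k => ?_
    rw [psi_eq hb]
    ring
  · simp only [Gs, Ss]
    ring

lemma main_int {δ D q : ℝ} (hδ : 0 < δ) (hD : 0 < D) (hq : 0 < q) (hqD : 2 * q / D < 1) :
    ∫ b in Set.Ioi (0:ℝ), b ^ (δ - 1) * deriv^[3] (Gs D (fun k => Ccoef δ k * q ^ k)) b =
    -(δ - 2) * Kcoef δ * (2 / D) ^ ((δ - 3) / 2) *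
      hyp2F1 ((δ + 1) / 2) ((δ - 3) / 2) (δ / 2) (2 * q / D) := by
  have hpos : ∀ k : ℕ, 0 < Ccoef δ k * q ^ k := fun k => by
    have := Ccoef_pos hδ k
    positivity
  rw [setIntegral_congr_fun measurableSet_Ioi fun b hb => tsum_psi (rapid_C hδ hq) hb]
  have := hasSum_integral_of_summable_integral_norm (μ := volume.restrict (Set.Ioi (0:ℝ)))
    (F := fun k b => (Ccoef δ k * q ^ k) * psi δ D k b)
    (fun k => (psi_int hδ hD k).1.const_mul _) ?_
  · rw [← this.tsum_eq, hyp2F1, ← tsum_mul_left]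
    refine tsum_congr fun k => ?_
    rw [integral_const_mul, psi_val hδ hD, Ccoef, Kcoef, Gamma_poch (by positivity),
      Gamma_poch (by positivity), div_pow, div_pow, mul_pow]
    have h3 := Real.Gamma_pos_of_pos (s := δ / 2) (by positivity)
    have h4 : 0 < poch (δ / 2) k := Finset.prod_pos fun i _ => by positivity
    field_simp
  · refine Summable.of_nonneg_of_le (fun k => integral_nonneg fun b => norm_nonneg _) (fun k => ?_)
      ((summable_U hδ hD hq hqD).mul_left (12 * D ^ 3))
    simp only [norm_mul (Ccoef δ k * q ^ k)]
    rw [integral_const_mul, Real.norm_of_nonneg (hpos k).le]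
    have := mul_le_mul_of_nonneg_left (psi_bound hδ hD k) (hpos k).le
    linarith

lemma deriv3_const_mul (A : ℝ) (f : ℝ → ℝ) (b : ℝ) :
    deriv^[3] (fun b => A * f b) b = A * deriv^[3] f b := by
  change deriv (deriv (deriv (fun b => A * f b))) b = A * deriv (deriv (deriv f)) b
  have e : ∀ g : ℝ → ℝ, deriv (fun b => A * g b) = fun b => A * deriv g b := fun g => by
    funext x; exact deriv_const_mul_field A
  rw [e, e, e]

theorem integral_third_derivative_sigma (δ : ℝ) (hδ : 0 < δ) (s r : ℝ)
    (hs : 0 < s) (hsr : s < r) (hr : r < 1) :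
    (∫ b in Set.Ioi (0:ℝ), b ^ (δ - 1) * deriv^[3] (SigmaRS δ r s) b)
      = -(δ - 2) * Kcoef δ * (r - s) ^ (δ / 2 - 1) * s ^ ((1 : ℝ) / 2) *
          (1 - r) ^ (-(3 : ℝ) / 2) * r ^ (-((δ + 1) / 2)) * (1 - s) ^ ((3 - δ) / 2) *
          hyp2F1 ((δ + 1) / 2) ((δ - 3) / 2) (δ / 2) (s * (1 - r) / (r * (1 - s))) := by
  have hr0 : 0 < r := hs.trans hsr
  have h1r : 0 < 1 - r := by linarith
  have h1s : 0 < 1 - s := by linarith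
  have hrs : 0 < r - s := by linarith
  set D := (1 - s) / ((r - s) * (1 - r)) with hDdef
  set q := s / (2 * r * (r - s)) with hqdef
  have hD : 0 < D := by positivity
  have hq : 0 < q := by positivity
  have hz : 2 * q / D = s * (1 - r) / (r * (1 - s)) := by
    rw [hqdef, hDdef]; field_simp
  have hqD : 2 * q / D < 1 := by
    rw [hz, div_lt_one (by positivity)]; nlinarith
  set A := ((2 : ℝ) ^ (δ / 2 - 1) * (r * (1 - r)) ^ (δ / 2))⁻¹ *
    ((2 * (r - s)) ^ ((1:ℝ) / 2) * (s / r) ^ ((1:ℝ) / 2)) with hA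
  have hS : SigmaRS δ r s = fun b => A * Gs D (fun k => Ccoef δ k * q ^ k) b := by
    funext b
    have hD' : Dcoef s r = D := by rw [Dcoef, if_pos hsr]
    have hf : ∀ k, fcoef s r k = ((2 * (r - s)) ^ ((1:ℝ) / 2) * (s / r) ^ ((1:ℝ) / 2)) * q ^ k := by
      intro k
      rw [fcoef, if_pos hsr, Real.rpow_sub_natCast (by positivity), add_comm,
        Real.rpow_add_natCast (by positivity), hqdef,
        show s / (2 * r * (r - s)) = (s / r) / (2 * (r - s)) by field_simp, div_pow (s / r)]
      ring
    rw [SigmaRS, hD', Gs, Ss, hA, ← tsum_mul_left, ← tsum_mul_left, ← tsum_mul_left]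
    refine tsum_congr fun k => ?_
    rw [hf, pow_mul]
    ring
  rw [hS]
  simp only [deriv3_const_mul]
  simp only [mul_left_comm _ A]
  rw [integral_const_mul, main_int hδ hD hq hqD, hz]
  have hconst : A * (2 / D) ^ ((δ - 3) / 2) = (r - s) ^ (δ / 2 - 1) * s ^ ((1 : ℝ) / 2) *
          (1 - r) ^ (-(3 : ℝ) / 2) * r ^ (-((δ + 1) / 2)) * (1 - s) ^ ((3 - δ) / 2) := by
    have h2D : 2 / D = 2 * (r - s) * (1 - r) / (1 - s) := by rw [hDdef]; field_simp
    have p2 : (0:ℝ) < 2 := two_pos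
    apply Real.log_injOn_pos
    · simp only [Set.mem_Ioi]; positivity
    · simp only [Set.mem_Ioi]; positivity
    rw [hA, h2D]
    have l2 := fun x : ℝ => (Real.rpow_pos_of_pos p2 x).ne'
    rw [Real.log_mul (by positivity) (by positivity), Real.log_mul (by positivity) (by positivity),
      Real.log_inv, Real.log_mul (by positivity) (by positivity),
      Real.log_mul (by positivity) (by positivity), Real.log_mul (by positivity) (by positivity),
      Real.log_mul (by positivity) (by positivity), Real.log_mul (by positivity) (by positivity),
      Real.log_mul (by positivity) (by positivity)]
    repeat rw [Real.log_rpow (by positivity)]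
    rw [Real.log_div (by positivity) (by positivity), Real.log_div (by positivity) (by positivity),
      Real.log_mul (by positivity) (by positivity), Real.log_mul (by positivity) (by positivity),
      Real.log_mul (x := 2 * (r - s)) (by positivity) (by positivity),
      Real.log_mul (by positivity) (by positivity)]
    ring
  linear_combination (-(δ - 2) * Kcoef δ *
    hyp2F1 ((δ + 1) / 2) ((δ - 3) / 2) (δ / 2) (s * (1 - r) / (r * (1 - s)))) * hconst
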